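/- Let σ : ℝ → ℝ be expressive and let (f_n) be a sequence of Boolean functions f_n : {±1}^n → {±1} with inputs uniform on {±1}^n. If INAL(f_n, σ) is negligible, then for every ε > 0 the cross-predictability CP(orb(f̄_n), U^N) is negligible, where N = n^{1+ε}, f̄_n is the N-extension of f_n, orb(f̄_n) denotes the uniform distribution on the orbit {f̄_n ∘ π : π ∈ S_N}, and U^N is the uniform distribution on {±1}^N. -/

import Mathlib

open MeasureTheory ProbabilityTheory Filter Finset Asymptotics
open scoped NNReal ENNReal

noncomputable section

/-- The ±1 value encoded by a Boolean bit. -/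
def bsign (b : Bool) : ℝ := if b then 1 else -1

/-- Expectation over a uniformly random point of the Boolean cube `{±1}^n`. -/
def bExp (n : ℕ) (g : (Fin n → Bool) → ℝ) : ℝ :=
  (∑ x : Fin n → Bool, g x) / 2 ^ n

/-- A function on the Boolean cube is Boolean(-valued) if it takes values in `{±1}`. -/
def IsBooleanFn {n : ℕ} (f : (Fin n → Bool) → ℝ) : Prop := ∀ x, f x = 1 ∨ f x = -1

/-- Initialization distribution: the weights `w : ℝⁿ` and the bias `b` are
iid `N(0, 1/n)` Gaussians. -/
def initMeasure (n : ℕ) : Measure ((Fin n → ℝ) × ℝ) :=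
  (Measure.pi fun _ : Fin n => gaussianReal 0 (n : ℝ≥0)⁻¹).prod (gaussianReal 0 (n : ℝ≥0)⁻¹)

/-- Initial alignment `INAL(f, σ) = E_{w,b} [ (E_x [f(x) σ(wᵀx + b)])² ]`. -/
def INAL (n : ℕ) (f : (Fin n → Bool) → ℝ) (σ : ℝ → ℝ) : ℝ :=
  ∫ θ : (Fin n → ℝ) × ℝ,
    (bExp n fun x => f x * σ (∑ i, θ.1 i * bsign (x i) + θ.2)) ^ 2 ∂ initMeasure n

/-- The `v`-Gaussian smoothing `Σ_v(t) = E_{Y ∼ N(0,v)} [σ(Y + t)]`. -/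
def gsmooth (σ : ℝ → ℝ) (v : ℝ) (t : ℝ) : ℝ :=
  ∫ y, σ (y + t) ∂ gaussianReal 0 v.toNNReal

/-- `σ` is polynomially bounded: `|σ(x)| ≤ C |x|^c + C` for some `C, c > 0`. -/
def PolyBounded (σ : ℝ → ℝ) : Prop :=
  ∃ C : ℝ, 0 < C ∧ ∃ c : ℕ, 0 < c ∧ ∀ x : ℝ, |σ x| ≤ C * |x| ^ c + C

/-- `σ` is expressive: measurable, polynomially bounded, and its Gaussian smoothing has no
two consecutive vanishing derivatives at `0`. -/
def Expressive (σ : ℝ → ℝ) : Prop :=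
  Measurable σ ∧ PolyBounded σ ∧
    ∀ m : ℕ, iteratedDeriv m (gsmooth σ 1) 0 ≠ 0 ∨ iteratedDeriv (m + 1) (gsmooth σ 1) 0 ≠ 0

/-- A nonnegative sequence is negligible if it decays faster than any inverse polynomial. -/
def Negligible (g : ℕ → ℝ) : Prop :=
  ∀ c : ℕ, Tendsto (fun n : ℕ => (n : ℝ) ^ c * g n) atTop (nhds 0)

/-- Fourier character `M_S(x) = ∏_{i ∈ S} x_i`. -/
def chi {n : ℕ} (S : Finset (Fin n)) (x : Fin n → Bool) : ℝ := ∏ i ∈ S, bsign (x i)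

/-- Fourier coefficient `f̂(S) = E_x [f(x) M_S(x)]`. -/
def fourierCoef (n : ℕ) (f : (Fin n → Bool) → ℝ) (S : Finset (Fin n)) : ℝ :=
  bExp n fun x => f x * chi S x

/-- Fourier weight up to degree `k`: `W^{≤k}(f)`. -/
def weightLE (n k : ℕ) (f : (Fin n → Bool) → ℝ) : ℝ :=
  ∑ S ∈ Finset.univ.filter (fun S : Finset (Fin n) => S.card ≤ k), fourierCoef n f S ^ 2

/-- Fourier weight strictly below degree `k`: `W^{<k}(f)`. -/
def weightLT (n k : ℕ) (f : (Fin n → Bool) → ℝ) : ℝ :=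
  ∑ S ∈ Finset.univ.filter (fun S : Finset (Fin n) => S.card < k), fourierCoef n f S ^ 2

/-- The monomial `M_k(x) = ∏_{i=1}^k x_i`, viewed as a function on `{±1}^n`. -/
def monomial (n k : ℕ) : (Fin n → Bool) → ℝ :=
  fun x => ∏ i ∈ Finset.univ.filter (fun i : Fin n => (i : ℕ) < k), bsign (x i)

/-- The `N`-extension of `f : {±1}^n → ℝ` (for `n ≤ N`): ignore the last `N - n` coordinates. -/
def extendFn (n N : ℕ) (f : (Fin n → Bool) → ℝ) : (Fin N → Bool) → ℝ :=
  fun x => f fun i => if h : (i : ℕ) < N then x ⟨i, h⟩ else false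

/-- Cross-predictability of (the uniform distribution on) the orbit of `f` under coordinate
permutations, with uniform inputs: `CP(orb(f), U^N)`. -/
def orbitCP (N : ℕ) (f : (Fin N → Bool) → ℝ) : ℝ :=
  (∑ π : Equiv.Perm (Fin N), ∑ π' : Equiv.Perm (Fin N),
      (bExp N fun x => f (fun i => x (π i)) * f (fun i => x (π' i))) ^ 2) /
    (Fintype.card (Equiv.Perm (Fin N))) ^ 2

/-- `N = n^{1+ε}` (rounded up). -/
def Ndim (ε : ℝ) (n : ℕ) : ℕ := ⌈(n : ℝ) ^ (1 + ε)⌉₊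

/-!
Treat the bias as the weight of an extra input coordinate that is constantly `1`, so that there are
`n + 1` i.i.d. weights `θ` of variance `1 / n`. Testing the alignment `E_x [f(x) σ(⟨θ, x⟩)]`
against the monomial `∏_{i ∈ S} θ_i` and integrating by parts (the Stein identity) once per index of
`S` returns `n^{-|S|} f̂(T) Σ^{(|S|)}(0)`, where `T` is `S` without the bias coordinate and the
smoothing `Σ` has variance `1 + 1 / n`; by Cauchy–Schwarz its square is at most
`n^{-|S|} INAL(f, σ)`. For a given `T`, the two choices of `S` give access to two consecutive
derivatives, one of which is nonzero at variance `1`, hence bounded away from zero for large `n`. So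
every `f̂(T) ^ 2` with `|T|` fixed is at most `poly(n) · INAL(f, σ)`, and each low-degree Fourier
weight is negligible.

On the other side, by Parseval and Cauchy–Schwarz, the cross-predictability of the orbit of `f̄`
is bounded in terms of the Fourier weights of `f`, the weight at degree `d` being damped by a factor
`(n / N)^d ≤ n^{-ε d}` because a random permutation of `N` coordinates keeps a `d`-set inside the
`n` relevant ones with at most that probability. Cutting at a large degree `k` leaves the negligible
weight below `k` plus a tail of size `n^{-ε k}`.
-/

section Negligible

lemma Negligible.const_mul {g : ℕ → ℝ} (hg : Negligible g) (C : ℝ) :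
    Negligible fun n => C * g n := fun c => by
  simpa only [mul_zero, mul_left_comm] using (hg c).const_mul C

lemma Negligible.pow_mul {g : ℕ → ℝ} (hg : Negligible g) (a : ℕ) :
    Negligible fun n => (n : ℝ) ^ a * g n := fun c => by
  simpa only [← mul_assoc, ← pow_add] using hg (c + a)

lemma Negligible.add {g h : ℕ → ℝ} (hg : Negligible g) (hh : Negligible h) :
    Negligible fun n => g n + h n := fun c => by
  simpa only [mul_add, add_zero] using (hg c).add (hh c)

lemma Negligible.mono {g h : ℕ → ℝ} (hh : Negligible h) (hg : ∀ n, 0 ≤ g n)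
    (hgh : ∀ᶠ n in atTop, g n ≤ h n) : Negligible g := fun c => by
  refine squeeze_zero' (.of_forall fun n => mul_nonneg (by positivity) (hg n)) ?_ (hh c)
  filter_upwards [hgh] with n hn
  gcongr

lemma negligible_of_forall_le_add_inv_pow {g : ℕ → ℝ} (hg : ∀ n, 0 ≤ g n)
    (h : ∀ m : ℕ, ∃ r, Negligible r ∧ ∀ᶠ n : ℕ in atTop, g n ≤ r n + ((n : ℝ) ^ m)⁻¹) :
    Negligible g := by
  intro c
  obtain ⟨r, hr, hgr⟩ := h (c + 1)
  have hlim : Tendsto (fun n : ℕ => (n : ℝ) ^ c * r n + (n : ℝ)⁻¹) atTop (nhds 0) := by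
    simpa only [add_zero] using (hr c).add (tendsto_inv_atTop_nhds_zero_nat (𝕜 := ℝ))
  refine squeeze_zero' (.of_forall fun n => mul_nonneg (by positivity) (hg n)) ?_ hlim
  filter_upwards [hgr, eventually_gt_atTop 0] with n hn hn0
  calc (n : ℝ) ^ c * g n ≤ (n : ℝ) ^ c * (r n + ((n : ℝ) ^ (c + 1))⁻¹) := by gcongr
    _ = (n : ℝ) ^ c * r n + (n : ℝ)⁻¹ := by field_simp; ring

end Negligible

section Fourier

variable {n N : ℕ}

lemma bsign_mul_self (b : Bool) : bsign b * bsign b = 1 := by cases b <;> simp [bsign]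

lemma bExp_sum_mul {κ : Type*} (s : Finset κ) (a : κ → ℝ) (g : κ → (Fin n → Bool) → ℝ) :
    bExp n (fun x => ∑ j ∈ s, a j * g j x) = ∑ j ∈ s, a j * bExp n (g j) := by
  simp only [bExp, ← mul_div_assoc, ← sum_div, mul_sum]
  rw [sum_comm]

lemma bExp_sq_nonneg (f : (Fin n → Bool) → ℝ) : 0 ≤ bExp n fun x => f x ^ 2 := by
  unfold bExp; positivity

lemma bExp_comp_perm (π : Equiv.Perm (Fin n)) (g : (Fin n → Bool) → ℝ) :
    bExp n (fun x => g fun i => x (π i)) = bExp n g :=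
  congrArg (· / (2 : ℝ) ^ n) (Equiv.sum_comp (Equiv.arrowCongr π.symm (Equiv.refl Bool)) g)

lemma chi_eq_prod_ite (S : Finset (Fin n)) (x : Fin n → Bool) :
    chi S x = ∏ i, if i ∈ S then bsign (x i) else 1 := by
  simp [chi, prod_ite_mem]

lemma chi_mul_self (S : Finset (Fin n)) (x : Fin n → Bool) : chi S x * chi S x = 1 := by
  simp [chi, ← prod_mul_distrib, bsign_mul_self]

lemma chi_map (ι : Fin n ↪ Fin N) (T : Finset (Fin n)) (x : Fin N → Bool) :
    chi (T.map ι) x = chi T fun i => x (ι i) := prod_map _ _ _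

lemma sum_chi_mul_chi (x y : Fin n → Bool) :
    ∑ S : Finset (Fin n), chi S x * chi S y = if x = y then 2 ^ n else 0 := by
  have hprod : ∑ S : Finset (Fin n), chi S x * chi S y = ∏ i, (1 + bsign (x i) * bsign (y i)) := by
    simp only [prod_one_add, chi, prod_mul_distrib, powerset_univ]
  rw [hprod]
  split_ifs with hxy
  · subst hxy
    norm_num [bsign_mul_self]
  · obtain ⟨i, hi⟩ := Function.ne_iff.mp hxy
    refine prod_eq_zero (mem_univ i) ?_
    revert hi
    cases x i <;> cases y i <;> simp [bsign]

lemma bExp_chi_mul_chi (S T : Finset (Fin n)) :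
    bExp n (fun x => chi S x * chi T x) = if S = T then 1 else 0 := by
  have hfactor : ∑ x : Fin n → Bool, chi S x * chi T x =
      ∏ i, ∑ b : Bool, (if i ∈ S then bsign b else 1) * if i ∈ T then bsign b else 1 := by
    simp only [chi_eq_prod_ite, ← prod_mul_distrib, prod_univ_sum, Fintype.piFinset_univ]
  rw [bExp, hfactor]
  split_ifs with hST
  · subst hST
    have hcoord (i : Fin n) :
        ∑ b : Bool, (if i ∈ S then bsign b else 1) * (if i ∈ S then bsign b else 1) = 2 := by
      split_ifs <;> norm_num [bsign]
    rw [prod_congr rfl fun i _ => hcoord i]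
    simp
  · obtain ⟨i, hi⟩ : ∃ i, ¬(i ∈ S ↔ i ∈ T) := by simpa [Finset.ext_iff] using hST
    rw [prod_eq_zero (mem_univ i), zero_div]
    by_cases hS : i ∈ S <;> by_cases hT : i ∈ T <;> simp_all [bsign]

lemma sum_fourierCoef_mul_chi (f : (Fin n → Bool) → ℝ) (x : Fin n → Bool) :
    ∑ S, fourierCoef n f S * chi S x = f x := by
  calc ∑ S, fourierCoef n f S * chi S x
      = (∑ y, f y * ∑ S : Finset (Fin n), chi S y * chi S x) / 2 ^ n := by
        simp only [fourierCoef, bExp, div_mul_eq_mul_div, ← sum_div, sum_mul, mul_sum, mul_assoc]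
        rw [sum_comm]
    _ = f x := by simp [sum_chi_mul_chi]

lemma bExp_mul_eq_sum_fourierCoef (F G : (Fin n → Bool) → ℝ) :
    bExp n (fun x => F x * G x) = ∑ S, fourierCoef n F S * fourierCoef n G S := by
  calc bExp n (fun x => F x * G x)
      = bExp n (fun x => ∑ S, fourierCoef n F S * (G x * chi S x)) := by
        congr! 2 with x
        rw [← sum_fourierCoef_mul_chi F x, sum_mul]
        exact sum_congr rfl fun S _ => by ring
    _ = ∑ S, fourierCoef n F S * fourierCoef n G S := bExp_sum_mul _ _ _

lemma sum_sq_fourierCoef (f : (Fin n → Bool) → ℝ) :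
    ∑ S, fourierCoef n f S ^ 2 = bExp n fun x => f x ^ 2 := by
  simp only [sq, bExp_mul_eq_sum_fourierCoef]

lemma fourierCoef_comp_embedding (ι : Fin n ↪ Fin N) (f : (Fin n → Bool) → ℝ)
    (S : Finset (Fin N)) :
    fourierCoef N (fun x => f fun i => x (ι i)) S =
      ∑ T, if T.map ι = S then fourierCoef n f T else 0 := by
  calc fourierCoef N (fun x => f fun i => x (ι i)) S
      = bExp N (fun x => ∑ T, fourierCoef n f T * (chi (T.map ι) x * chi S x)) := by
        change bExp N (fun x => f (fun i => x (ι i)) * chi S x) = _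
        congr! 2 with x
        rw [← sum_fourierCoef_mul_chi f, sum_mul]
        simp only [chi_map, mul_assoc]
    _ = _ := by simp only [bExp_sum_mul, bExp_chi_mul_chi, mul_ite, mul_one, mul_zero]

lemma fourierCoef_comp_embedding_map (ι : Fin n ↪ Fin N) (f : (Fin n → Bool) → ℝ)
    (T : Finset (Fin n)) :
    fourierCoef N (fun x => f fun i => x (ι i)) (T.map ι) = fourierCoef n f T := by
  simp [fourierCoef_comp_embedding]

lemma fourierCoef_comp_embedding_eq_zero (ι : Fin n ↪ Fin N) (f : (Fin n → Bool) → ℝ)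
    {S : Finset (Fin N)} (hS : ¬S ⊆ univ.map ι) :
    fourierCoef N (fun x => f fun i => x (ι i)) S = 0 := by
  rw [fourierCoef_comp_embedding]
  refine sum_eq_zero fun T _ => if_neg ?_
  rintro rfl
  exact hS (map_subset_map.mpr (subset_univ T))

lemma sum_mul_sq_fourierCoef_comp_embedding (ι : Fin n ↪ Fin N) (f : (Fin n → Bool) → ℝ)
    (φ : ℕ → ℝ) :
    ∑ S : Finset (Fin N), φ #S * fourierCoef N (fun x => f fun i => x (ι i)) S ^ 2 =
      ∑ T : Finset (Fin n), φ #T * fourierCoef n f T ^ 2 := by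
  symm
  refine sum_of_injOn (Finset.map ι) (map_injective ι).injOn (by simp) (fun S _ hS => ?_)
    fun T _ => by rw [fourierCoef_comp_embedding_map, card_map]
  rw [fourierCoef_comp_embedding_eq_zero, zero_pow two_ne_zero, mul_zero]
  intro hsub
  obtain ⟨T, -, rfl⟩ := subset_map_iff.mp hsub
  exact hS ⟨T, by simp, rfl⟩

lemma sum_pow_card_mul_sq_fourierCoef_le {ρ : ℝ} (hρ₀ : 0 ≤ ρ) (hρ₁ : ρ ≤ 1)
    (f : (Fin n → Bool) → ℝ) (k : ℕ) :
    ∑ T : Finset (Fin n), ρ ^ #T * fourierCoef n f T ^ 2 ≤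
      weightLT n k f + ρ ^ k * bExp n fun x => f x ^ 2 := by
  rw [← sum_sq_fourierCoef, weightLT, sum_filter, mul_sum, ← sum_add_distrib]
  refine sum_le_sum fun T _ => ?_
  split_ifs with hT
  · have hle : ρ ^ #T * fourierCoef n f T ^ 2 ≤ fourierCoef n f T ^ 2 :=
      mul_le_of_le_one_left (sq_nonneg _) (pow_le_one₀ hρ₀ hρ₁)
    exact hle.trans (le_add_of_nonneg_right (by positivity))
  · rw [zero_add]
    gcongr ?_ * _
    exact pow_le_pow_of_le_one hρ₀ hρ₁ (not_lt.mp hT)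

lemma weightLT_nonneg (k : ℕ) (f : (Fin n → Bool) → ℝ) : 0 ≤ weightLT n k f :=
  sum_nonneg fun _ _ => sq_nonneg _

lemma weightLT_succ (k : ℕ) (f : (Fin n → Bool) → ℝ) :
    weightLT n (k + 1) f =
      weightLT n k f + ∑ S ∈ powersetCard k univ, fourierCoef n f S ^ 2 := by
  have hsplit : univ.filter (fun S : Finset (Fin n) => #S < k + 1) =
      univ.filter (fun S => #S < k) ∪ powersetCard k univ := by
    ext S
    simpa [mem_powersetCard] using le_iff_lt_or_eq
  rw [weightLT, hsplit, sum_union, weightLT]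
  exact disjoint_left.mpr fun S hS hS' => by simp_all [mem_powersetCard]

end Fourier

section Counting

lemma choose_mul_pow_le_choose_mul_pow {m M : ℕ} (h : m ≤ M) (s : ℕ) :
    m.choose s * M ^ s ≤ M.choose s * m ^ s := by
  have hdesc : m.descFactorial s * M ^ s ≤ M.descFactorial s * m ^ s := by
    induction s with
    | zero => simp
    | succ s ih =>
      have hfactor : (m - s) * M ≤ (M - s) * m := by
        rw [Nat.sub_mul, Nat.sub_mul, Nat.mul_comm M m]
        exact Nat.sub_le_sub_left (Nat.mul_le_mul_left s h) _
      calc m.descFactorial (s + 1) * M ^ (s + 1)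
          = (m - s) * M * (m.descFactorial s * M ^ s) := by rw [Nat.descFactorial_succ]; ring
        _ ≤ (M - s) * m * (M.descFactorial s * m ^ s) := Nat.mul_le_mul hfactor ih
        _ = M.descFactorial (s + 1) * m ^ (s + 1) := by rw [Nat.descFactorial_succ]; ring
  rw [Nat.descFactorial_eq_factorial_mul_choose, Nat.descFactorial_eq_factorial_mul_choose,
    Nat.mul_assoc, Nat.mul_assoc] at hdesc
  exact Nat.le_of_mul_le_mul_left hdesc s.factorial_pos

variable {α : Type*} [Fintype α] [DecidableEq α]

lemma card_perm_subset_map_congr (A : Finset α) {S T : Finset α} (h : #S = #T) :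
    #{π : Equiv.Perm α | S ⊆ A.map π.toEmbedding} =
      #{π : Equiv.Perm α | T ⊆ A.map π.toEmbedding} := by
  obtain ⟨τ, rfl⟩ := Equiv.Perm.exists_map_finset_eq _ _ h
  refine card_equiv (Equiv.mulLeft τ) fun π => ?_
  have hmap : A.map (τ * π).toEmbedding = (A.map π.toEmbedding).map τ.toEmbedding := by
    rw [Finset.map_map]; rfl
  simp [hmap]

lemma card_perm_subset_map_mul_choose (A S : Finset α) :
    #{π : Equiv.Perm α | S ⊆ A.map π.toEmbedding} * (Fintype.card α).choose #S =
      (Fintype.card α).factorial * (#A).choose #S := by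
  calc #{π : Equiv.Perm α | S ⊆ A.map π.toEmbedding} * (Fintype.card α).choose #S
      = ∑ T ∈ powersetCard #S univ, #{π : Equiv.Perm α | T ⊆ A.map π.toEmbedding} := by
        rw [sum_congr rfl fun T hT => card_perm_subset_map_congr A (mem_powersetCard.mp hT).2]
        simp [mul_comm]
    _ = ∑ π : Equiv.Perm α, #{T ∈ powersetCard #S univ | T ⊆ A.map π.toEmbedding} :=
        sum_card_bipartiteAbove_eq_sum_card_bipartiteBelow _
    _ = ∑ _ : Equiv.Perm α, (#A).choose #S := by
        refine sum_congr rfl fun π _ => ?_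
        have hfilter : ({T ∈ powersetCard #S univ | T ⊆ A.map π.toEmbedding} : Finset _) =
            powersetCard #S (A.map π.toEmbedding) := by
          ext T
          simp [mem_powersetCard, and_comm]
        rw [hfilter, card_powersetCard, card_map]
    _ = (Fintype.card α).factorial * (#A).choose #S := by simp [Fintype.card_perm]

lemma card_perm_subset_map_le (A S : Finset α) :
    (#{π : Equiv.Perm α | S ⊆ A.map π.toEmbedding} : ℝ) ≤
      (Fintype.card α).factorial * ((#A : ℝ) / Fintype.card α) ^ #S := by
  rcases isEmpty_or_nonempty α with hα | hα
  · simp [Finset.eq_empty_of_isEmpty]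
  have hchoose : 0 < (Fintype.card α).choose #S := Nat.choose_pos (card_le_univ S)
  have hcard : (0 : ℝ) < Fintype.card α := by exact_mod_cast Fintype.card_pos
  rw [div_pow, ← mul_div_assoc, le_div_iff₀ (pow_pos hcard _)]
  refine le_of_mul_le_mul_right ?_ (Nat.cast_pos (α := ℝ).mpr hchoose)
  norm_cast
  calc _ = (Fintype.card α).factorial * ((#A).choose #S * Fintype.card α ^ #S) := by
        rw [mul_right_comm, card_perm_subset_map_mul_choose, mul_assoc]
    _ ≤ (Fintype.card α).factorial * ((Fintype.card α).choose #S * #A ^ #S) :=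
        Nat.mul_le_mul_left _ (choose_mul_pow_le_choose_mul_pow (card_le_univ A) _)
    _ = _ := by ring

end Counting

section Orbit

variable {n N : ℕ}

lemma orbitCP_nonneg (F : (Fin N → Bool) → ℝ) : 0 ≤ orbitCP N F := by
  unfold orbitCP; positivity

lemma orbitCP_eq_sum_div (F : (Fin N → Bool) → ℝ) :
    orbitCP N F = (∑ π : Equiv.Perm (Fin N), bExp N (fun x => F x * F fun i => x (π i)) ^ 2) /
      N.factorial := by
  have hinner (π : Equiv.Perm (Fin N)) : ∑ π' : Equiv.Perm (Fin N),
        bExp N (fun x => F (fun i => x (π i)) * F fun i => x (π' i)) ^ 2 =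
      ∑ τ : Equiv.Perm (Fin N), bExp N (fun x => F x * F fun i => x (τ i)) ^ 2 := by
    rw [← Equiv.sum_comp (Equiv.mulLeft π)]
    refine sum_congr rfl fun τ _ => ?_
    rw [← bExp_comp_perm π fun x => F x * F fun i => x (τ i)]
    rfl
  have hpos : (N.factorial : ℝ) ≠ 0 := by exact_mod_cast N.factorial_ne_zero
  simp only [orbitCP, hinner, sum_const, card_univ, nsmul_eq_mul, Fintype.card_perm,
    Fintype.card_fin]
  field_simp

lemma sq_bExp_mul_comp_perm_le (ι : Fin n ↪ Fin N) (f : (Fin n → Bool) → ℝ)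
    (π : Equiv.Perm (Fin N)) :
    bExp N (fun x => f (fun i => x (ι i)) * f fun i => x (π (ι i))) ^ 2 ≤
      (bExp n fun x => f x ^ 2) * ∑ S : Finset (Fin N),
        if S ⊆ (univ.map ι).map π.toEmbedding then
          fourierCoef N (fun x => f fun i => x (ι i)) S ^ 2 else 0 := by
  have hvanish {S : Finset (Fin N)} (hS : ¬S ⊆ (univ.map ι).map π.toEmbedding) :
      fourierCoef N (fun x => f fun i => x (π (ι i))) S = 0 :=
    fourierCoef_comp_embedding_eq_zero (ι.trans π.toEmbedding) f (by rwa [Finset.map_map] at hS)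
  have hnorm : ∑ S, fourierCoef N (fun x => f fun i => x (π (ι i))) S ^ 2 =
      bExp n fun x => f x ^ 2 := by
    simpa [sum_sq_fourierCoef] using
      sum_mul_sq_fourierCoef_comp_embedding (ι.trans π.toEmbedding) f fun _ => 1
  rw [bExp_mul_eq_sum_fourierCoef, ← sum_filter, ← hnorm,
    ← sum_filter_of_ne (p := (· ⊆ (univ.map ι).map π.toEmbedding)) fun S _ hS => ?_]
  · rw [mul_comm]
    refine (sum_mul_sq_le_sq_mul_sq _ _ _).trans ?_
    gcongr
    exact filter_subset _ _
  · exact not_imp_comm.mp (fun h => by rw [hvanish h, mul_zero]) hS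

theorem orbitCP_comp_embedding_le (ι : Fin n ↪ Fin N) (f : (Fin n → Bool) → ℝ) (k : ℕ) :
    orbitCP N (fun x => f fun i => x (ι i)) ≤
      (bExp n fun x => f x ^ 2) *
        (weightLT n k f + ((n : ℝ) / N) ^ k * bExp n fun x => f x ^ 2) := by
  set F : (Fin N → Bool) → ℝ := fun x => f fun i => x (ι i)
  have hmoment := bExp_sq_nonneg f
  have hratio : (n : ℝ) / N ≤ 1 :=
    div_le_one_of_le₀ (by exact_mod_cast Fin.le_of_embedding ι) N.cast_nonneg
  rw [orbitCP_eq_sum_div, div_le_iff₀ (by exact_mod_cast N.factorial_pos)]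
  calc ∑ π : Equiv.Perm (Fin N), bExp N (fun x => F x * F fun i => x (π i)) ^ 2
      ≤ ∑ π : Equiv.Perm (Fin N), (bExp n fun x => f x ^ 2) * ∑ S,
          if S ⊆ (univ.map ι).map π.toEmbedding then fourierCoef N F S ^ 2 else 0 :=
        sum_le_sum fun π _ => sq_bExp_mul_comp_perm_le ι f π
    _ = (bExp n fun x => f x ^ 2) * ∑ S,
          #{π : Equiv.Perm (Fin N) | S ⊆ (univ.map ι).map π.toEmbedding} *
            fourierCoef N F S ^ 2 := by
        rw [← mul_sum, sum_comm]
        simp only [← sum_filter, sum_const, nsmul_eq_mul]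
    _ ≤ (bExp n fun x => f x ^ 2) * ∑ S,
          N.factorial * (((n : ℝ) / N) ^ #S) * fourierCoef N F S ^ 2 := by
        gcongr with S
        simpa using card_perm_subset_map_le (univ.map ι) S
    _ = (bExp n fun x => f x ^ 2) *
          (∑ T : Finset (Fin n), ((n : ℝ) / N) ^ #T * fourierCoef n f T ^ 2) *
            N.factorial := by
        rw [← sum_mul_sq_fourierCoef_comp_embedding ι f fun s => ((n : ℝ) / N) ^ s]
        simp only [mul_sum, sum_mul]
        exact sum_congr rfl fun S _ => by ring
    _ ≤ _ := by
        gcongr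
        exact sum_pow_card_mul_sq_fourierCoef_le (by positivity) hratio f k

lemma extendFn_eq_comp_castLEEmb (h : n ≤ N) (f : (Fin n → Bool) → ℝ) :
    extendFn n N f = fun x => f fun i => x (Fin.castLEEmb h i) := by
  funext x
  unfold extendFn
  congr! 2 with i
  exact dif_pos (i.2.trans_le h)

lemma le_Ndim {ε : ℝ} (hε : 0 ≤ ε) (n : ℕ) : n ≤ Ndim ε n := by
  rcases n.eq_zero_or_pos with rfl | hn
  · exact Nat.zero_le _
  have hn1 : (1 : ℝ) ≤ n := by exact_mod_cast hn
  have hle : (n : ℝ) ≤ (n : ℝ) ^ (1 + ε) := Real.self_le_rpow_of_one_le hn1 (by linarith)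
  exact_mod_cast hle.trans (Nat.le_ceil _)

lemma div_Ndim_le_rpow_neg (ε : ℝ) (n : ℕ) : (n : ℝ) / Ndim ε n ≤ (n : ℝ) ^ (-ε) := by
  rcases n.eq_zero_or_pos with rfl | hn
  · simpa using Real.rpow_nonneg le_rfl _
  have hn0 : (0 : ℝ) < n := by exact_mod_cast hn
  calc (n : ℝ) / Ndim ε n ≤ n / (n : ℝ) ^ (1 + ε) := by
        gcongr
        exact Nat.le_ceil _
    _ = (n : ℝ) ^ (-ε) := by
        rw [Real.rpow_add hn0, Real.rpow_one, Real.rpow_neg hn0.le]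
        field_simp

lemma exists_div_Ndim_pow_le {ε : ℝ} (hε : 0 < ε) (m : ℕ) :
    ∃ k : ℕ, ∀ n : ℕ, 0 < n → ((n : ℝ) / Ndim ε n) ^ k ≤ ((n : ℝ) ^ m)⁻¹ := by
  obtain ⟨k, hk⟩ := exists_nat_ge (m / ε)
  refine ⟨k, fun n hn => ?_⟩
  have hn1 : (1 : ℝ) ≤ n := by exact_mod_cast hn
  have hmk : (m : ℝ) ≤ ε * k := by rwa [mul_comm, ← div_le_iff₀ hε]
  calc ((n : ℝ) / Ndim ε n) ^ k ≤ ((n : ℝ) ^ (-ε)) ^ k := by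
        gcongr
        exact div_Ndim_le_rpow_neg ε n
    _ = (n : ℝ) ^ (-(ε * k)) := by rw [← Real.rpow_natCast, ← Real.rpow_mul n.cast_nonneg, neg_mul]
    _ ≤ (n : ℝ) ^ (-(m : ℝ)) := Real.rpow_le_rpow_of_exponent_le hn1 (neg_le_neg hmk)
    _ = ((n : ℝ) ^ m)⁻¹ := by rw [Real.rpow_neg n.cast_nonneg, Real.rpow_natCast]

theorem orbitCP_extendFn_negligible {f : ∀ n : ℕ, (Fin n → Bool) → ℝ} {p : ℕ}
    (hf : ∀ᶠ n : ℕ in atTop, bExp n (fun x => f n x ^ 2) ≤ (n : ℝ) ^ p)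
    (hweight : ∀ k, Negligible fun n => weightLT n k (f n)) {ε : ℝ} (hε : 0 < ε) :
    Negligible fun n => orbitCP (Ndim ε n) (extendFn n (Ndim ε n) (f n)) := by
  refine negligible_of_forall_le_add_inv_pow (fun n => orbitCP_nonneg _) fun m => ?_
  obtain ⟨k, hk⟩ := exists_div_Ndim_pow_le hε (2 * p + m)
  refine ⟨_, (hweight k).pow_mul p, ?_⟩
  filter_upwards [hf, eventually_gt_atTop 0] with n hfn hn
  have hmoment := bExp_sq_nonneg (f n)
  have hweight_nonneg := weightLT_nonneg k (f n)
  rw [extendFn_eq_comp_castLEEmb (le_Ndim hε.le n)]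
  calc orbitCP (Ndim ε n) (fun x => f n fun i => x (Fin.castLEEmb (le_Ndim hε.le n) i))
      ≤ (bExp n fun x => f n x ^ 2) * (weightLT n k (f n) +
          ((n : ℝ) / Ndim ε n) ^ k * bExp n fun x => f n x ^ 2) :=
        orbitCP_comp_embedding_le _ _ _
    _ ≤ (n : ℝ) ^ p * (weightLT n k (f n) + ((n : ℝ) ^ (2 * p + m))⁻¹ * (n : ℝ) ^ p) := by
        gcongr
        exact hk n hn
    _ = (n : ℝ) ^ p * weightLT n k (f n) + ((n : ℝ) ^ m)⁻¹ := by
        field_simp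
        ring

end Orbit

section ExpGrowth

variable {u w : ℝ → ℝ}

/-- Measurable functions of at most exponential growth. Every such function is integrable against
every Gaussian, and the class is stable under products, translations, Gaussian smoothing and
derivatives of Gaussian smoothings. -/
structure ExpGrowth (u : ℝ → ℝ) : Prop where
  measurable : Measurable u
  exists_le : ∃ C c : ℝ≥0, ∀ x, |u x| ≤ C * Real.exp (c * |x|)

namespace ExpGrowth

protected lemma id : ExpGrowth fun x => x :=
  ⟨measurable_id, 1, 1, fun x => by
    simpa using (le_add_of_nonneg_right zero_le_one).trans (Real.add_one_le_exp |x|)⟩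

lemma const_mul (hu : ExpGrowth u) (a : ℝ) : ExpGrowth fun x => a * u x := by
  obtain ⟨C, c, h⟩ := hu.exists_le
  refine ⟨hu.measurable.const_mul a, ‖a‖₊ * C, c, fun x => ?_⟩
  rw [abs_mul, NNReal.coe_mul, coe_nnnorm, Real.norm_eq_abs, mul_assoc]
  gcongr
  exact h x

protected lemma mul (hu : ExpGrowth u) (hw : ExpGrowth w) : ExpGrowth fun x => u x * w x := by
  obtain ⟨C, c, h⟩ := hu.exists_le
  obtain ⟨D, d, h'⟩ := hw.exists_le
  refine ⟨hu.measurable.mul hw.measurable, C * D, c + d, fun x => ?_⟩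
  calc |u x * w x| ≤ (C * Real.exp (c * |x|)) * (D * Real.exp (d * |x|)) := by
        rw [abs_mul]
        gcongr
        exacts [h x, h' x]
    _ = ↑(C * D) * Real.exp (↑(c + d) * |x|) := by
        push_cast
        rw [add_mul, Real.exp_add]
        ring

lemma exists_add_le (hu : ExpGrowth u) :
    ∃ C c : ℝ≥0, ∀ x y, |u (x + y)| ≤ C * Real.exp (c * |x|) * Real.exp (c * |y|) := by
  obtain ⟨C, c, h⟩ := hu.exists_le
  refine ⟨C, c, fun x y => (h _).trans ?_⟩
  rw [mul_assoc, ← Real.exp_add, ← mul_add]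
  gcongr
  exact abs_add_le x y

lemma comp_add_right (hu : ExpGrowth u) (t : ℝ) : ExpGrowth fun x => u (x + t) := by
  obtain ⟨C, c, h⟩ := hu.exists_add_le
  refine ⟨hu.measurable.comp (measurable_add_const t), C * (Real.exp (c * |t|)).toNNReal, c,
    fun x => (h x t).trans_eq ?_⟩
  rw [NNReal.coe_mul, Real.coe_toNNReal _ (Real.exp_nonneg _)]
  ring

lemma exp_mul (a : ℝ) : ExpGrowth fun x => Real.exp (a * x) := by
  refine ⟨by fun_prop, 1, ‖a‖₊, fun x => ?_⟩
  simpa [abs_mul] using le_abs_self (a * x)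

lemma exp_mul_abs (c : ℝ≥0) : ExpGrowth fun x => Real.exp (c * |x|) :=
  ⟨by fun_prop, 1, c, fun x => by simp⟩

lemma integrable_gaussianReal (hu : ExpGrowth u) (μ : ℝ) (v : ℝ≥0) :
    Integrable u (gaussianReal μ v) := by
  obtain ⟨C, c, h⟩ := hu.exists_le
  exact ((integrable_exp_mul_abs (integrable_exp_mul_gaussianReal _)
    (integrable_exp_mul_gaussianReal _)).const_mul _).mono'
    hu.measurable.aestronglyMeasurable (.of_forall h)

end ExpGrowth

lemma PolyBounded.expGrowth (hpoly : PolyBounded u) (hmeas : Measurable u) : ExpGrowth u := by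
  obtain ⟨C, hC, c, -, h⟩ := hpoly
  refine ⟨hmeas, 2 * C.toNNReal, c, fun x => (h x).trans ?_⟩
  have hpow : |x| ^ c ≤ Real.exp (c * |x|) := by
    rw [Real.exp_nat_mul]
    gcongr
    linarith [Real.add_one_le_exp |x|]
  have hone : 1 ≤ Real.exp (c * |x|) := Real.one_le_exp (by positivity)
  push_cast
  rw [Real.coe_toNNReal _ hC.le]
  nlinarith

end ExpGrowth

section GaussianSmoothing

variable {u w : ℝ → ℝ}

lemma gsmooth_coe (u : ℝ → ℝ) (v : ℝ≥0) (t : ℝ) :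
    gsmooth u v t = ∫ y, u (y + t) ∂gaussianReal 0 v := by
  rw [gsmooth, Real.toNNReal_coe]

lemma ExpGrowth.integral_mul_comp_add (hu : ExpGrowth u) (hw : ExpGrowth w) (v : ℝ≥0) :
    ExpGrowth fun t => ∫ y, w y * u (y + t) ∂gaussianReal 0 v := by
  obtain ⟨C, c, h⟩ := hu.exists_add_le
  have hmeas : Measurable fun p : ℝ × ℝ => w p.2 * u (p.2 + p.1) :=
    (hw.measurable.comp measurable_snd).mul
      (hu.measurable.comp (measurable_snd.add measurable_fst))
  refine ⟨hmeas.stronglyMeasurable.integral_prod_right.measurable,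
    (∫ y, |w y| * (C * Real.exp (c * |y|)) ∂gaussianReal 0 v).toNNReal, c, fun t => ?_⟩
  rw [Real.coe_toNNReal _ (integral_nonneg fun y => by positivity), ← integral_mul_const]
  refine abs_integral_le_integral_abs.trans (integral_mono ?_ ?_ fun y => ?_)
  · exact ((hw.mul (hu.comp_add_right t)).integrable_gaussianReal 0 v).abs
  · refine Integrable.mul_const ?_ _
    refine ((hw.mul ((exp_mul_abs c).const_mul C)).integrable_gaussianReal 0 v).abs.congr
      (.of_forall fun y => ?_)
    dsimp only
    rw [abs_mul, abs_of_nonneg (by positivity : 0 ≤ C * Real.exp (c * |y|))]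
  · dsimp only
    rw [abs_mul, mul_assoc]
    gcongr
    exact h y t

protected lemma ExpGrowth.gsmooth (hu : ExpGrowth u) (v : ℝ≥0) : ExpGrowth (gsmooth u v) := by
  have hone : ExpGrowth fun _ => 1 := by simpa using exp_mul_abs 0
  have hsmooth : gsmooth u v = fun t => ∫ y, 1 * u (y + t) ∂gaussianReal 0 v :=
    funext fun t => by simp only [gsmooth_coe, one_mul]
  exact hsmooth ▸ hu.integral_mul_comp_add hone v

lemma gsmooth_gsmooth (hu : ExpGrowth u) (r s : ℝ≥0) :
    gsmooth (gsmooth u r) s = gsmooth u (r + s : ℝ≥0) := by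
  funext t
  have hconv : (gaussianReal 0 s) ∗ (gaussianReal 0 r) = gaussianReal 0 (r + s) := by
    rw [gaussianReal_conv_gaussianReal, add_zero, add_comm]
  simp only [gsmooth_coe]
  rw [← hconv, integral_conv]
  · simp only [add_left_comm, add_comm]
  · exact hconv ▸ (hu.comp_add_right t).integrable_gaussianReal 0 (r + s)

lemma integral_gaussianReal_comp_add {v : ℝ≥0} (hv : v ≠ 0) (g : ℝ → ℝ) (t : ℝ) :
    ∫ y, g (y + t) ∂gaussianReal 0 v =
      Real.exp (-t ^ 2 / (2 * v)) * ∫ y, g y * Real.exp ((v : ℝ)⁻¹ * t * y) ∂gaussianReal 0 v := by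
  have hv0 : (v : ℝ) ≠ 0 := by exact_mod_cast hv
  simp only [integral_gaussianReal_eq_integral_smul hv, smul_eq_mul]
  rw [← integral_sub_right_eq_self _ t, ← integral_const_mul]
  refine integral_congr_ae (.of_forall fun y => ?_)
  have hexp : Real.exp (-(y - t) ^ 2 / (2 * v)) =
      Real.exp (-t ^ 2 / (2 * v)) * Real.exp ((v : ℝ)⁻¹ * t * y) * Real.exp (-y ^ 2 / (2 * v)) := by
    rw [← Real.exp_add, ← Real.exp_add]
    congr 1
    field_simp
    ring
  simp only [gaussianPDFReal, sub_zero, sub_add_cancel, hexp]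
  ring

lemma hasDerivAt_integral_mul_exp (hu : ExpGrowth u) (v : ℝ≥0) (a t : ℝ) :
    HasDerivAt (fun t => ∫ y, u y * Real.exp (a * t * y) ∂gaussianReal 0 v)
      (a * ∫ y, y * u y * Real.exp (a * t * y) ∂gaussianReal 0 v) t := by
  have hexp (s : ℝ) : ExpGrowth fun y => Real.exp (a * s * y) := ExpGrowth.exp_mul (a * s)
  let c : ℝ≥0 := ‖a‖₊ * (‖t‖₊ + 1)
  have hdom : ExpGrowth fun y => a * y * u y * Real.exp (c * |y|) :=
    ((ExpGrowth.id.const_mul a).mul hu).mul (ExpGrowth.exp_mul_abs c)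
  have hderiv := (hasDerivAt_integral_of_dominated_loc_of_deriv_le (μ := gaussianReal 0 v)
    (F := fun s y => u y * Real.exp (a * s * y))
    (F' := fun s y => a * (y * u y * Real.exp (a * s * y)))
    (bound := fun y => |a * y * u y * Real.exp (c * |y|)|) (Metric.ball_mem_nhds t one_pos)
    (.of_forall fun s => (hu.mul (hexp s)).measurable.aestronglyMeasurable)
    ((hu.mul (hexp t)).integrable_gaussianReal 0 v)
    (((ExpGrowth.id.mul hu).mul (hexp t)).const_mul a).measurable.aestronglyMeasurable
    (.of_forall fun y s hs => ?_) (hdom.integrable_gaussianReal 0 v).abs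
    (.of_forall fun y s _ => ?_)).2
  · rwa [integral_const_mul] at hderiv
  · have hs1 : |s| ≤ |t| + 1 := by
      have := abs_sub_abs_le_abs_sub s t
      rw [Metric.mem_ball, Real.dist_eq] at hs
      linarith
    have hle : a * s * y ≤ c * |y| := by
      refine (le_abs_self _).trans ?_
      simp only [c, abs_mul, NNReal.coe_mul, NNReal.coe_add, coe_nnnorm, Real.norm_eq_abs,
        NNReal.coe_one]
      gcongr
    rw [Real.norm_eq_abs, ← mul_assoc, ← mul_assoc, abs_mul, abs_mul (a * y * u y), Real.abs_exp,
      Real.abs_exp]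
    gcongr
  · have hlin : HasDerivAt (fun s => a * s * y) (a * y) s := by
      simpa using ((hasDerivAt_id s).const_mul a).mul_const y
    exact (hlin.exp.const_mul (u y)).congr_deriv (by ring)

-- Tilting the Gaussian density moves `t` into an exponential factor, so `u` need not be regular.
lemma hasDerivAt_gsmooth (hu : ExpGrowth u) {v : ℝ≥0} (hv : v ≠ 0) (t : ℝ) :
    HasDerivAt (gsmooth u v) ((v : ℝ)⁻¹ * ∫ y, y * u (y + t) ∂gaussianReal 0 v) t := by
  have hsmooth : gsmooth u v = fun s => Real.exp (-s ^ 2 / (2 * v)) *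
      ∫ y, u y * Real.exp ((v : ℝ)⁻¹ * s * y) ∂gaussianReal 0 v :=
    funext fun s => by rw [gsmooth_coe, integral_gaussianReal_comp_add hv]
  have hquad : HasDerivAt (fun s : ℝ => -s ^ 2 / (2 * v)) (-((v : ℝ)⁻¹ * t)) t := by
    refine ((hasDerivAt_pow 2 t).neg.div_const (2 * (v : ℝ))).congr_deriv ?_
    have hv0 : (v : ℝ) ≠ 0 := by exact_mod_cast hv
    field_simp
    simp
  have htilt : ∫ y, y * u (y + t) ∂gaussianReal 0 v = Real.exp (-t ^ 2 / (2 * v)) *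
      ((∫ y, y * u y * Real.exp ((v : ℝ)⁻¹ * t * y) ∂gaussianReal 0 v) -
        t * ∫ y, u y * Real.exp ((v : ℝ)⁻¹ * t * y) ∂gaussianReal 0 v) := by
    have hexp := ExpGrowth.exp_mul ((v : ℝ)⁻¹ * t)
    rw [← integral_const_mul, ← integral_sub
      (((ExpGrowth.id.mul hu).mul hexp).integrable_gaussianReal 0 v)
      (((hu.mul hexp).const_mul t).integrable_gaussianReal 0 v)]
    simpa only [add_sub_cancel_right, sub_mul, mul_assoc] using
      integral_gaussianReal_comp_add hv (fun y => (y - t) * u y) t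
  rw [hsmooth, htilt]
  exact (hquad.exp.mul (hasDerivAt_integral_mul_exp hu v _ t)).congr_deriv (by ring)

lemma gaussianReal_stein_identity (hu : ExpGrowth u) {v : ℝ≥0} (hv : v ≠ 0) (t : ℝ) :
    ∫ y, y * u (y + t) ∂gaussianReal 0 v = v * deriv (gsmooth u v) t := by
  rw [(hasDerivAt_gsmooth hu hv t).deriv, mul_inv_cancel_left₀ (by exact_mod_cast hv)]

lemma ExpGrowth.deriv_gsmooth (hu : ExpGrowth u) {v : ℝ≥0} (hv : v ≠ 0) :
    ExpGrowth (deriv (gsmooth u v)) := by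
  have hderiv : deriv (gsmooth u v) = fun t => (v : ℝ)⁻¹ * ∫ y, y * u (y + t) ∂gaussianReal 0 v :=
    funext fun t => (hasDerivAt_gsmooth hu hv t).deriv
  exact hderiv ▸ (hu.integral_mul_comp_add ExpGrowth.id v).const_mul _

lemma integrable_mul_comp_add_prod_gaussianReal (hu : ExpGrowth u) (hw : ExpGrowth w) (r s : ℝ≥0) :
    Integrable (fun p : ℝ × ℝ => w p.2 * u (p.1 + p.2))
      ((gaussianReal 0 r).prod (gaussianReal 0 s)) := by
  obtain ⟨C, c, h⟩ := hu.exists_add_le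
  have hexp := ExpGrowth.exp_mul_abs c
  refine (((hexp.const_mul C).integrable_gaussianReal 0 r).mul_prod
    ((hw.mul hexp).integrable_gaussianReal 0 s)).mono ?_ (.of_forall fun p => ?_)
  · exact ((hw.measurable.comp measurable_snd).mul
      (hu.measurable.comp (measurable_fst.add measurable_snd))).aestronglyMeasurable
  · simp only [norm_mul, Real.norm_eq_abs, Real.abs_exp, NNReal.abs_eq]
    calc |w p.2| * |u (p.1 + p.2)|
        ≤ |w p.2| * (C * Real.exp (c * |p.1|) * Real.exp (c * |p.2|)) := by gcongr; exact h _ _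
      _ = _ := by ring

lemma gsmooth_deriv_gsmooth (hu : ExpGrowth u) {s : ℝ≥0} (hs : s ≠ 0) (r : ℝ≥0) :
    gsmooth (deriv (gsmooth u s)) r = deriv (gsmooth u (r + s : ℝ≥0)) := by
  funext t
  rw [← gsmooth_gsmooth hu r s, (hasDerivAt_gsmooth (hu.gsmooth r) hs t).deriv, gsmooth_coe]
  calc ∫ z, deriv (gsmooth u s) (z + t) ∂gaussianReal 0 r
      = (s : ℝ)⁻¹ * ∫ z, ∫ y, y * u (z + y + t) ∂gaussianReal 0 s ∂gaussianReal 0 r := by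
        rw [← integral_const_mul]
        refine integral_congr_ae (.of_forall fun z => ?_)
        simp only [(hasDerivAt_gsmooth hu hs _).deriv, add_left_comm, add_assoc]
    _ = (s : ℝ)⁻¹ * ∫ y, ∫ z, y * u (z + y + t) ∂gaussianReal 0 r ∂gaussianReal 0 s := by
        rw [integral_integral_swap
          (integrable_mul_comp_add_prod_gaussianReal (hu.comp_add_right t) ExpGrowth.id r s)]
    _ = (s : ℝ)⁻¹ * ∫ y, y * gsmooth u r (y + t) ∂gaussianReal 0 s := by
        simp only [gsmooth_coe, integral_const_mul, add_assoc]

-- Half of the variance absorbs the first `k` derivatives, the other half the next one. The two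
-- claims are proved together because each inductive step uses both.
lemma expGrowth_iteratedDeriv_gsmooth_and_gsmooth_eq (hu : ExpGrowth u) (k : ℕ) :
    ∀ r : ℝ≥0, (k ≠ 0 → r ≠ 0) → ExpGrowth (iteratedDeriv k (gsmooth u r)) ∧
      ∀ s : ℝ≥0, gsmooth (iteratedDeriv k (gsmooth u r)) s =
        iteratedDeriv k (gsmooth u (s + r : ℝ≥0)) := by
  induction k with
  | zero => exact fun r _ => ⟨by simpa using hu.gsmooth r,
      fun s => by simp [gsmooth_gsmooth hu, add_comm]⟩
  | succ k ih =>
    intro r hr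
    have hhalf : r / 2 ≠ 0 := by simpa using hr k.succ_ne_zero
    obtain ⟨hgrowth, hcomm⟩ := ih (r / 2) fun _ => hhalf
    have hsucc : iteratedDeriv (k + 1) (gsmooth u r) =
        deriv (gsmooth (iteratedDeriv k (gsmooth u (r / 2 : ℝ≥0))) (r / 2 : ℝ≥0)) := by
      rw [hcomm, iteratedDeriv_succ, add_halves]
    rw [hsucc]
    refine ⟨hgrowth.deriv_gsmooth hhalf, fun s => ?_⟩
    rw [gsmooth_deriv_gsmooth hgrowth hhalf, hcomm, iteratedDeriv_succ, add_assoc, add_halves]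

lemma ExpGrowth.iteratedDeriv_gsmooth (hu : ExpGrowth u) {k : ℕ} {r : ℝ≥0} (hr : k ≠ 0 → r ≠ 0) :
    ExpGrowth (iteratedDeriv k (gsmooth u r)) :=
  (expGrowth_iteratedDeriv_gsmooth_and_gsmooth_eq hu k r hr).1

lemma gsmooth_iteratedDeriv_gsmooth (hu : ExpGrowth u) {k : ℕ} {r : ℝ≥0} (hr : k ≠ 0 → r ≠ 0)
    (s : ℝ≥0) : gsmooth (iteratedDeriv k (gsmooth u r)) s =
      iteratedDeriv k (gsmooth u (s + r : ℝ≥0)) :=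
  (expGrowth_iteratedDeriv_gsmooth_and_gsmooth_eq hu k r hr).2 s

lemma continuous_iteratedDeriv_gsmooth (hu : ExpGrowth u) {r : ℝ≥0} (hr : r ≠ 0) (k : ℕ) :
    Continuous (iteratedDeriv k (gsmooth u r)) := by
  have hhalf : r / 2 ≠ 0 := by simpa using hr
  rw [← add_halves r, ← gsmooth_iteratedDeriv_gsmooth hu (fun _ => hhalf)]
  exact continuous_iff_continuousAt.mpr fun t =>
    (hasDerivAt_gsmooth (hu.iteratedDeriv_gsmooth fun _ => hhalf) hhalf t).continuousAt

lemma gsmooth_eq_integral_sqrt_mul (hu : Measurable u) (v : ℝ≥0) (t : ℝ) :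
    gsmooth u v t = ∫ y, u (√v * y + t) ∂gaussianReal 0 1 := by
  have hscale : gaussianReal 0 v = (gaussianReal 0 1).map (√v * ·) := by
    rw [gaussianReal_map_const_mul, mul_zero, mul_one]
    congr
    ext
    simp
  rw [gsmooth_coe, hscale]
  exact integral_map (by fun_prop) (hu.comp (measurable_add_const t)).aestronglyMeasurable

lemma tendsto_gsmooth_zero (hu : ExpGrowth u) {t : ℝ} (ht : ContinuousAt u t) :
    Tendsto (fun v : ℝ≥0 => gsmooth u v t) (nhds 0) (nhds (u t)) := by
  obtain ⟨C, c, h⟩ := hu.exists_add_le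
  have hlim : ∫ _, u t ∂gaussianReal 0 1 = u t := by simp
  simp only [gsmooth_eq_integral_sqrt_mul hu.measurable]
  rw [← hlim]
  refine tendsto_integral_filter_of_dominated_convergence
    (fun y => C * Real.exp (c * |t|) * Real.exp (c * |y|)) (.of_forall fun v => ?_) ?_
    (((ExpGrowth.exp_mul_abs c).const_mul _).integrable_gaussianReal 0 1) (.of_forall fun y => ?_)
  · exact (hu.measurable.comp (by fun_prop)).aestronglyMeasurable
  · filter_upwards [Iic_mem_nhds zero_lt_one] with v hv
    refine .of_forall fun y => ?_
    have hsqrt : √v ≤ 1 := Real.sqrt_le_one.mpr hv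
    have hy : |√v * y| ≤ |y| := by
      rw [abs_mul, abs_of_nonneg (Real.sqrt_nonneg _)]
      exact mul_le_of_le_one_left (abs_nonneg y) hsqrt
    rw [add_comm]
    refine (h t (√v * y)).trans ?_
    gcongr
  · have hpath : Tendsto (fun v : ℝ≥0 => √v * y + t) (nhds 0) (nhds t) := by
      have hcont : Continuous fun v : ℝ≥0 => √(v : ℝ) * y + t := by fun_prop
      simpa using hcont.tendsto 0
    exact ht.tendsto.comp hpath

lemma tendsto_iteratedDeriv_gsmooth (hu : ExpGrowth u) {r : ℝ≥0} (hr : r ≠ 0) (k : ℕ) (t : ℝ) :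
    Tendsto (fun v : ℝ≥0 => iteratedDeriv k (gsmooth u (v + r : ℝ≥0)) t) (nhds 0)
      (nhds (iteratedDeriv k (gsmooth u r) t)) := by
  simpa only [gsmooth_iteratedDeriv_gsmooth hu fun _ : k ≠ 0 => hr] using
    tendsto_gsmooth_zero (hu.iteratedDeriv_gsmooth fun _ => hr)
      (continuous_iteratedDeriv_gsmooth hu hr k).continuousAt

end GaussianSmoothing

section FinSucc

variable {m : ℕ}

lemma prod_finset_fin_succ {M : Type*} [CommMonoid M] (S : Finset (Fin (m + 1)))
    (g : Fin (m + 1) → M) :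
    ∏ i ∈ S, g i = (if 0 ∈ S then g 0 else 1) * ∏ i : Fin m with i.succ ∈ S, g i.succ := by
  rw [prod_filter, ← Fin.prod_univ_succ fun i => if i ∈ S then g i else 1, prod_ite_mem, univ_inter]

lemma card_finset_fin_succ (S : Finset (Fin (m + 1))) :
    #S = (if 0 ∈ S then 1 else 0) + #{i : Fin m | i.succ ∈ S} := by
  have hcard := Fin.card_filter_univ_succ (· ∈ S)
  rw [filter_univ_mem] at hcard
  grind

end FinSucc

section GaussianPi

variable {ι : Type*} [Fintype ι] {u : ℝ → ℝ} {v : ℝ≥0} {m : ℕ}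

/-- The law of a family of independent `N(0, v)` variables indexed by `ι`. -/
abbrev gaussianPi (ι : Type*) [Fintype ι] (v : ℝ≥0) : Measure (ι → ℝ) :=
  Measure.pi fun _ => gaussianReal 0 v

lemma ExpGrowth.integrable_comp_sum (hu : ExpGrowth u) :
    Integrable (fun θ => u (∑ i, θ i)) (gaussianPi ι v) := by
  obtain ⟨C, c, h⟩ := hu.exists_le
  have henvelope : Integrable (fun θ : ι → ℝ => C * ∏ i, Real.exp (c * |θ i|)) (gaussianPi ι v) :=
    (Integrable.fintype_prod fun _ => (exp_mul_abs c).integrable_gaussianReal 0 v).const_mul _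
  refine henvelope.mono' (hu.measurable.comp (by fun_prop)).aestronglyMeasurable
    (.of_forall fun θ => (h _).trans ?_)
  rw [← Real.exp_sum, ← mul_sum]
  gcongr
  exact abs_sum_le_sum_abs _ _

lemma ExpGrowth.memLp_two_comp_sum (hu : ExpGrowth u) :
    MemLp (fun θ => u (∑ i, θ i)) 2 (gaussianPi ι v) := by
  refine (memLp_two_iff_integrable_sq (hu.integrable_comp_sum).aestronglyMeasurable).mpr ?_
  simpa only [sq] using (hu.mul hu).integrable_comp_sum

lemma prod_sq_eq_prod_univ [DecidableEq ι] (S : Finset ι) (θ : ι → ℝ) :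
    (∏ i ∈ S, θ i) ^ 2 = ∏ i, if i ∈ S then θ i ^ 2 else 1 := by
  simp [← prod_pow, prod_ite_mem]

lemma memLp_two_prod_gaussianPi (S : Finset ι) :
    MemLp (fun θ => ∏ i ∈ S, θ i) 2 (gaussianPi ι v) := by
  classical
  rw [memLp_two_iff_integrable_sq (by fun_prop)]
  simp only [prod_sq_eq_prod_univ]
  refine Integrable.fintype_prod (f := fun i y => if i ∈ S then y ^ 2 else 1) fun i => ?_
  split_ifs
  · simpa only [sq] using (ExpGrowth.id.mul ExpGrowth.id).integrable_gaussianReal 0 v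
  · exact integrable_const 1

lemma integral_sq_gaussianReal (v : ℝ≥0) : ∫ y, y ^ 2 ∂gaussianReal 0 v = v := by
  rw [← variance_fun_id_gaussianReal (μ := 0) (v := v),
    variance_of_integral_eq_zero aemeasurable_id' integral_id_gaussianReal]

lemma integral_prod_sq_gaussianPi (S : Finset ι) :
    ∫ θ, (∏ i ∈ S, θ i) ^ 2 ∂gaussianPi ι v = (v : ℝ) ^ #S := by
  classical
  simp only [prod_sq_eq_prod_univ]
  rw [integral_fintype_prod_eq_prod fun i y => if i ∈ S then y ^ 2 else 1]
  have hcoord (i : ι) : ∫ y, (if i ∈ S then y ^ 2 else 1) ∂gaussianReal 0 v =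
      if i ∈ S then (v : ℝ) else 1 := by
    split_ifs <;> simp [integral_sq_gaussianReal]
  simp [hcoord, prod_ite_mem]

lemma integral_ite_mul_iteratedDeriv_gsmooth (hu : ExpGrowth u) (hv : v ≠ 0) {k : ℕ} {r : ℝ≥0}
    (hr : k ≠ 0 → r ≠ 0) (p : Prop) [Decidable p] (t : ℝ) :
    ∫ y, (if p then y else 1) * iteratedDeriv k (gsmooth u r) (y + t) ∂gaussianReal 0 v =
      (v : ℝ) ^ (if p then 1 else 0) *
        iteratedDeriv ((if p then 1 else 0) + k) (gsmooth u (v + r : ℝ≥0)) t := by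
  split_ifs
  · rw [gaussianReal_stein_identity (hu.iteratedDeriv_gsmooth hr) hv,
      gsmooth_iteratedDeriv_gsmooth hu hr, pow_one, add_comm 1 k, iteratedDeriv_succ]
  · simp only [one_mul, ← gsmooth_coe, gsmooth_iteratedDeriv_gsmooth hu hr, pow_zero, zero_add]

lemma measurePreserving_fin_cons_gaussianPi :
    MeasurePreserving (fun p : ℝ × (Fin m → ℝ) => (Fin.cons p.1 p.2 : Fin (m + 1) → ℝ))
      ((gaussianReal 0 v).prod (gaussianPi (Fin m) v)) (gaussianPi (Fin (m + 1)) v) := by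
  have hpres := (measurePreserving_piFinSuccAbove (fun _ : Fin (m + 1) => gaussianReal 0 v) 0).symm
  convert hpres with p
  simp [MeasurableEquiv.piFinSuccAbove, Fin.consEquiv]

lemma integral_gaussianPi_fin_succ {g : (Fin (m + 1) → ℝ) → ℝ}
    (hg : AEStronglyMeasurable g (gaussianPi (Fin (m + 1)) v)) :
    ∫ θ, g θ ∂gaussianPi (Fin (m + 1)) v =
      ∫ p : ℝ × (Fin m → ℝ), g (Fin.cons p.1 p.2)
        ∂(gaussianReal 0 v).prod (gaussianPi (Fin m) v) := by
  have hpres := measurePreserving_fin_cons_gaussianPi (v := v) (m := m)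
  rw [← hpres.map_eq] at hg ⊢
  exact integral_map hpres.aemeasurable hg

theorem integral_prod_mul_comp_sum (hu : ExpGrowth u) (hv : v ≠ 0) (S : Finset (Fin m)) (t : ℝ) :
    ∫ θ, (∏ i ∈ S, θ i) * u (∑ i, θ i + t) ∂gaussianPi (Fin m) v =
      (v : ℝ) ^ #S * iteratedDeriv #S (gsmooth u (m * v : ℝ≥0)) t := by
  induction m generalizing t with
  | zero => simp [S.eq_empty_of_isEmpty, gsmooth]
  | succ m ih =>
    set T : Finset (Fin m) := {i | i.succ ∈ S}
    have hint : Integrable (fun θ => (∏ i ∈ S, θ i) * u (∑ i, θ i + t))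
        (gaussianPi (Fin (m + 1)) v) :=
      (memLp_two_prod_gaussianPi S).integrable_mul (hu.comp_add_right t).memLp_two_comp_sum
    have hT : #T ≠ 0 → (m * v : ℝ≥0) ≠ 0 := fun hcard => by
      have hm : m ≠ 0 := by
        rintro rfl
        exact hcard (by simp [T.eq_empty_of_isEmpty])
      positivity
    have hinner (y : ℝ) : ∫ θ, (∏ i ∈ S, (Fin.cons y θ : Fin (m + 1) → ℝ) i) *
          u (∑ i, (Fin.cons y θ : Fin (m + 1) → ℝ) i + t) ∂gaussianPi (Fin m) v =
        (v : ℝ) ^ #T * ((if 0 ∈ S then y else 1) *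
          iteratedDeriv #T (gsmooth u (m * v : ℝ≥0)) (y + t)) := by
      rw [mul_left_comm, ← ih T (y + t), ← integral_const_mul]
      refine integral_congr_ae (.of_forall fun θ => ?_)
      simp only [prod_finset_fin_succ, Fin.sum_univ_succ, Fin.cons_zero, Fin.cons_succ, T]
      ring_nf
    rw [integral_gaussianPi_fin_succ hint.aestronglyMeasurable, integral_prod]
    · simp only [hinner, integral_const_mul, integral_ite_mul_iteratedDeriv_gsmooth hu hv hT]
      rw [card_finset_fin_succ S, pow_add, Nat.cast_succ, add_one_mul, add_comm (m * v : ℝ≥0)]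
      ring
    · exact (measurePreserving_fin_cons_gaussianPi.integrable_comp hint.aestronglyMeasurable).mpr
        hint

lemma measurePreserving_mul_bsign (x : ι → Bool) :
    MeasurePreserving (fun (θ : ι → ℝ) i => θ i * bsign (x i)) (gaussianPi ι v)
      (gaussianPi ι v) := by
  refine measurePreserving_pi (f := fun i y => y * bsign (x i)) _ _ fun i => ⟨by fun_prop, ?_⟩
  rw [gaussianReal_map_mul_const, mul_zero]
  congr
  ext
  simp [sq, bsign_mul_self]

lemma ExpGrowth.memLp_two_comp_sum_mul_bsign (hu : ExpGrowth u) (x : ι → Bool) :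
    MemLp (fun θ => u (∑ i, θ i * bsign (x i))) 2 (gaussianPi ι v) :=
  hu.memLp_two_comp_sum.comp_measurePreserving (measurePreserving_mul_bsign x)

theorem integral_prod_mul_comp_sum_mul_bsign (hu : ExpGrowth u) (hv : v ≠ 0) (S : Finset (Fin m))
    (x : Fin m → Bool) :
    ∫ θ, (∏ i ∈ S, θ i) * u (∑ i, θ i * bsign (x i)) ∂gaussianPi (Fin m) v =
      chi S x * ((v : ℝ) ^ #S * iteratedDeriv #S (gsmooth u (m * v : ℝ≥0)) 0) := by
  have hsign (θ : Fin m → ℝ) :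
      ∏ i ∈ S, θ i = chi S x * ∏ i ∈ S, θ i * bsign (x i) := by
    rw [prod_mul_distrib, mul_left_comm]
    exact (mul_one _).symm.trans (congrArg _ (chi_mul_self S x).symm)
  have hmeas : AEStronglyMeasurable (fun θ => (∏ i ∈ S, θ i) * u (∑ i, θ i))
      (gaussianPi (Fin m) v) :=
    (memLp_two_prod_gaussianPi S).aestronglyMeasurable.mul
      hu.memLp_two_comp_sum.aestronglyMeasurable
  have hpres := measurePreserving_mul_bsign (v := v) x
  calc ∫ θ, (∏ i ∈ S, θ i) * u (∑ i, θ i * bsign (x i)) ∂gaussianPi (Fin m) v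
      = ∫ θ, chi S x * ((∏ i ∈ S, θ i * bsign (x i)) * u (∑ i, θ i * bsign (x i)))
          ∂gaussianPi (Fin m) v := by
        congr 1 with θ
        rw [hsign θ, mul_assoc]
    _ = chi S x * ∫ θ, (∏ i ∈ S, θ i) * u (∑ i, θ i + 0) ∂gaussianPi (Fin m) v := by
        rw [← hpres.map_eq] at hmeas
        rw [integral_const_mul, ← integral_map hpres.aemeasurable hmeas, hpres.map_eq]
        simp only [add_zero]
    _ = chi S x * ((v : ℝ) ^ #S * iteratedDeriv #S (gsmooth u (m * v : ℝ≥0)) 0) := by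
        rw [integral_prod_mul_comp_sum hu hv]

lemma inner_toLp_eq_integral_mul {Ω : Type*} [MeasurableSpace Ω] {μ : Measure Ω} {g h : Ω → ℝ}
    (hg : MemLp g 2 μ) (hh : MemLp h 2 μ) :
    inner ℝ (hg.toLp g) (hh.toLp h) = ∫ ω, g ω * h ω ∂μ := by
  rw [L2.inner_def]
  refine integral_congr_ae ?_
  filter_upwards [hg.coeFn_toLp, hh.coeFn_toLp] with ω hgω hhω
  rw [hgω, hhω]
  exact mul_comm _ _

lemma sq_integral_mul_le {Ω : Type*} [MeasurableSpace Ω] {μ : Measure Ω} {g h : Ω → ℝ}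
    (hg : MemLp g 2 μ) (hh : MemLp h 2 μ) :
    (∫ ω, g ω * h ω ∂μ) ^ 2 ≤ (∫ ω, g ω ^ 2 ∂μ) * ∫ ω, h ω ^ 2 ∂μ := by
  simpa only [inner_toLp_eq_integral_mul, ← sq] using
    real_inner_mul_inner_self_le (hg.toLp g) (hh.toLp h)

end GaussianPi

section InitialAlignment

variable {n : ℕ} {σ : ℝ → ℝ}

lemma chi_fin_cons_true (S : Finset (Fin (n + 1))) (x : Fin n → Bool) :
    chi S (Fin.cons true x) = chi ({i | i.succ ∈ S} : Finset (Fin n)) x := by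
  simp [chi, prod_finset_fin_succ, bsign]

lemma ExpGrowth.memLp_two_bExp_mul_comp_sum (hσ : ExpGrowth σ) (f : (Fin n → Bool) → ℝ)
    (v : ℝ≥0) :
    MemLp (fun θ => bExp n fun x =>
      f x * σ (∑ j, θ j * bsign ((Fin.cons true x : Fin (n + 1) → Bool) j))) 2
      (gaussianPi (Fin (n + 1)) v) := by
  simp only [bExp, div_eq_mul_inv]
  exact (memLp_finsetSum univ fun x _ =>
    (hσ.memLp_two_comp_sum_mul_bsign _).const_mul (f x)).mul_const _

-- The bias is the weight of an additional input coordinate that always equals `1`.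
lemma INAL_eq_integral_gaussianPi (hσ : ExpGrowth σ) (f : (Fin n → Bool) → ℝ) :
    INAL n f σ = ∫ θ, (bExp n fun x =>
      f x * σ (∑ j, θ j * bsign ((Fin.cons true x : Fin (n + 1) → Bool) j))) ^ 2
      ∂gaussianPi (Fin (n + 1)) (n : ℝ≥0)⁻¹ := by
  rw [integral_gaussianPi_fin_succ
    (hσ.memLp_two_bExp_mul_comp_sum f _).integrable_sq.aestronglyMeasurable,
    ← integral_prod_swap, INAL, initMeasure]
  simp only [Prod.fst_swap, Prod.snd_swap, Fin.sum_univ_succ, Fin.cons_zero, Fin.cons_succ,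
    bsign, if_true, mul_one, add_comm]

lemma integral_prod_mul_bExp (hσ : ExpGrowth σ) (f : (Fin n → Bool) → ℝ)
    {v : ℝ≥0} (hv : v ≠ 0) (S : Finset (Fin (n + 1))) :
    ∫ θ, (∏ j ∈ S, θ j) * bExp n (fun x =>
        f x * σ (∑ j, θ j * bsign ((Fin.cons true x : Fin (n + 1) → Bool) j)))
        ∂gaussianPi (Fin (n + 1)) v =
      fourierCoef n f {i | i.succ ∈ S} *
        ((v : ℝ) ^ #S * iteratedDeriv #S (gsmooth σ ((n + 1 : ℕ) * v : ℝ≥0)) 0) := by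
  have hint (x : Fin n → Bool) : Integrable (fun θ => f x * ((∏ j ∈ S, θ j) *
      σ (∑ j, θ j * bsign ((Fin.cons true x : Fin (n + 1) → Bool) j))))
      (gaussianPi (Fin (n + 1)) v) :=
    ((memLp_two_prod_gaussianPi S).integrable_mul
      (hσ.memLp_two_comp_sum_mul_bsign _)).const_mul _
  simp only [bExp, fourierCoef, mul_div_assoc', mul_sum, mul_left_comm _ (f _)]
  rw [integral_div, integral_finsetSum _ fun x _ => hint x, div_mul_eq_mul_div, sum_mul]
  simp only [integral_const_mul, integral_prod_mul_comp_sum_mul_bsign hσ hv, chi_fin_cons_true,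
    mul_assoc]

theorem sq_fourierCoef_mul_iteratedDeriv_le (hσ : ExpGrowth σ) (hn : n ≠ 0)
    (f : (Fin n → Bool) → ℝ) (S : Finset (Fin (n + 1))) :
    fourierCoef n f {i | i.succ ∈ S} ^ 2 *
        iteratedDeriv #S (gsmooth σ ((n : ℝ≥0)⁻¹ + 1 : ℝ≥0)) 0 ^ 2 ≤
      (n : ℝ) ^ #S * INAL n f σ := by
  set v : ℝ≥0 := (n : ℝ≥0)⁻¹
  have hnv : (n : ℝ) * v = 1 := by simp [v, hn]
  have hvariance : ((n + 1 : ℕ) : ℝ≥0) * v = v + 1 := by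
    simp [v, add_mul, hn, add_comm]
  have hcauchy := sq_integral_mul_le (memLp_two_prod_gaussianPi S)
    (hσ.memLp_two_bExp_mul_comp_sum f v)
  rw [integral_prod_mul_bExp hσ f (by simp [v, hn]), integral_prod_sq_gaussianPi,
    ← INAL_eq_integral_gaussianPi hσ, hvariance] at hcauchy
  set D := iteratedDeriv #S (gsmooth σ (v + 1 : ℝ≥0)) 0
  set c := fourierCoef n f {i | i.succ ∈ S}
  calc c ^ 2 * D ^ 2 = ((n : ℝ) * v) ^ (#S * 2) * (c ^ 2 * D ^ 2) := by rw [hnv, one_pow, one_mul]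
    _ = (n : ℝ) ^ (#S * 2) * (c * ((v : ℝ) ^ #S * D)) ^ 2 := by ring
    _ ≤ (n : ℝ) ^ (#S * 2) * ((v : ℝ) ^ #S * INAL n f σ) := by gcongr
    _ = ((n : ℝ) * v) ^ #S * ((n : ℝ) ^ #S * INAL n f σ) := by ring
    _ = (n : ℝ) ^ #S * INAL n f σ := by rw [hnv, one_pow, one_mul]

lemma exists_sq_fourierCoef_le_of_iteratedDeriv_ne_zero (hσ : ExpGrowth σ) {m : ℕ}
    (hm : iteratedDeriv m (gsmooth σ 1) 0 ≠ 0) :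
    ∃ C : ℝ≥0, ∀ᶠ n : ℕ in atTop, ∀ (f : (Fin n → Bool) → ℝ) (S : Finset (Fin (n + 1))), #S = m →
      fourierCoef n f {i | i.succ ∈ S} ^ 2 ≤ C * ((n : ℝ) ^ m * INAL n f σ) := by
  set D := iteratedDeriv m (gsmooth σ 1) 0
  have hlim : Tendsto (fun n : ℕ => iteratedDeriv m (gsmooth σ ((n : ℝ≥0)⁻¹ + 1 : ℝ≥0)) 0 ^ 2)
      atTop (nhds (D ^ 2)) := by
    have := (tendsto_iteratedDeriv_gsmooth hσ one_ne_zero m 0).comp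
      (tendsto_inv_atTop_zero.comp tendsto_natCast_atTop_atTop)
    simpa using this.pow 2
  refine ⟨NNReal.mk (2 / D ^ 2) (by positivity), ?_⟩
  have hhalf : D ^ 2 / 2 < D ^ 2 := half_lt_self (by positivity)
  filter_upwards [hlim.eventually_const_lt hhalf, eventually_ne_atTop 0] with n hD hn f S hS
  have hbound := sq_fourierCoef_mul_iteratedDeriv_le hσ hn f S
  rw [hS] at hbound
  rw [NNReal.coe_mk, div_mul_eq_mul_div, le_div_iff₀ (by positivity)]
  linarith [mul_le_mul_of_nonneg_left hD.le (sq_nonneg (fourierCoef n f {i | i.succ ∈ S}))]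

-- A coefficient of degree `k` is tested against a monomial in `k` weights or, multiplying by the
-- bias, against one of degree `k + 1`, whichever derivative does not vanish.
lemma exists_eventually_sq_fourierCoef_le (hσ : ExpGrowth σ) {k : ℕ}
    (hk : iteratedDeriv k (gsmooth σ 1) 0 ≠ 0 ∨ iteratedDeriv (k + 1) (gsmooth σ 1) 0 ≠ 0) :
    ∃ (C : ℝ≥0) (m : ℕ), ∀ᶠ n : ℕ in atTop, ∀ (f : (Fin n → Bool) → ℝ) (T : Finset (Fin n)),
      #T = k → fourierCoef n f T ^ 2 ≤ C * ((n : ℝ) ^ m * INAL n f σ) := by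
  obtain hk | hk := hk
  · obtain ⟨C, hC⟩ := exists_sq_fourierCoef_le_of_iteratedDeriv_ne_zero hσ hk
    refine ⟨C, k, hC.mono fun n hn f T hT => ?_⟩
    simpa using hn f (T.map (Fin.succEmb n)) (by simpa using hT)
  · obtain ⟨C, hC⟩ := exists_sq_fourierCoef_le_of_iteratedDeriv_ne_zero hσ hk
    refine ⟨C, k + 1, hC.mono fun n hn f T hT => ?_⟩
    simpa using hn f (insert 0 (T.map (Fin.succEmb n))) (by simp [hT])

theorem weightLT_negligible_of_INAL_negligible (hσ : ExpGrowth σ)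
    (hderiv : ∀ m, iteratedDeriv m (gsmooth σ 1) 0 ≠ 0 ∨ iteratedDeriv (m + 1) (gsmooth σ 1) 0 ≠ 0)
    {f : ∀ n : ℕ, (Fin n → Bool) → ℝ} (hINAL : Negligible fun n => INAL n (f n) σ) (k : ℕ) :
    Negligible fun n => weightLT n k (f n) := by
  induction k with
  | zero => simp [weightLT, Negligible]
  | succ k ih =>
    obtain ⟨C, m, hC⟩ := exists_eventually_sq_fourierCoef_le hσ (hderiv k)
    have hlevel : Negligible fun n =>
        ∑ S ∈ powersetCard k univ, fourierCoef n (f n) S ^ 2 := by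
      refine (((hINAL.pow_mul m).const_mul C).pow_mul k).mono
        (fun n => sum_nonneg fun _ _ => sq_nonneg _) ?_
      filter_upwards [hC] with n hn
      calc ∑ S ∈ powersetCard k univ, fourierCoef n (f n) S ^ 2
          ≤ (n.choose k : ℝ) * (C * ((n : ℝ) ^ m * INAL n (f n) σ)) := by
            simpa using sum_le_card_nsmul (powersetCard k univ) _ _ fun S hS =>
              hn (f n) S (mem_powersetCard.mp hS).2
        _ ≤ (n : ℝ) ^ k * (C * ((n : ℝ) ^ m * INAL n (f n) σ)) := by
            have hINAL_nonneg : 0 ≤ INAL n (f n) σ := integral_nonneg fun _ => sq_nonneg _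
            gcongr
            exact_mod_cast Nat.choose_le_pow n k
    simpa only [weightLT_succ] using ih.add hlevel

end InitialAlignment

lemma IsBooleanFn.bExp_sq {n : ℕ} {f : (Fin n → Bool) → ℝ} (hf : IsBooleanFn f) :
    bExp n (fun x => f x ^ 2) = 1 := by
  have hsq (x : Fin n → Bool) : f x ^ 2 = 1 := by
    rcases hf x with h | h <;> simp [h]
  simp [bExp, hsq]

theorem inal_negligible_implies_orbitCP_negligible_general {σ : ℝ → ℝ} (hσ : ExpGrowth σ)
    (hderiv : ∀ m, iteratedDeriv m (gsmooth σ 1) 0 ≠ 0 ∨ iteratedDeriv (m + 1) (gsmooth σ 1) 0 ≠ 0)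
    {f : ∀ n : ℕ, (Fin n → Bool) → ℝ} {p : ℕ}
    (hf : ∀ᶠ n : ℕ in atTop, bExp n (fun x => f n x ^ 2) ≤ (n : ℝ) ^ p)
    (hINAL : Negligible fun n => INAL n (f n) σ) {ε : ℝ} (hε : 0 < ε) :
    Negligible fun n => orbitCP (Ndim ε n) (extendFn n (Ndim ε n) (f n)) :=
  orbitCP_extendFn_negligible hf (weightLT_negligible_of_INAL_negligible hσ hderiv hINAL) hε

/-- If `σ` is expressive and the Boolean sequence `(f_n)` has negligible
`INAL(f_n, σ)`, then for every `ε > 0` the cross-predictability of the orbit of the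
`n^{1+ε}`-extension of `f_n` is negligible. -/
theorem inal_negligible_implies_orbitCP_negligible
    (σ : ℝ → ℝ) (hσ : Expressive σ)
    (f : ∀ n : ℕ, (Fin n → Bool) → ℝ) (hf : ∀ n, IsBooleanFn (f n))
    (hINAL : Negligible fun n => INAL n (f n) σ) :
    ∀ ε : ℝ, 0 < ε →
      Negligible fun n => orbitCP (Ndim ε n) (extendFn n (Ndim ε n) (f n)) := by
  obtain ⟨hmeas, hpoly, hderiv⟩ := hσ
  exact fun ε => inal_negligible_implies_orbitCP_negligible_general (p := 0)
    (hpoly.expGrowth hmeas) hderiv (.of_forall fun n => by simp [(hf n).bExp_sq]) hINAL
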